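/- arXiv:math/0207042 — 2 statements merged into one kernel-verified Lean document; each statement's English description precedes it below -/
import Mathlib

section
/- Fix integers n ≥ 1 and k ≥ 0, and let C_0 ⊆ C_1 ⊆ ⋯ ⊆ C_{2k} be a chain of nonempty subsets of ℤ/n in which C_{i−1} = C_i for some i with 1 ≤ i ≤ 2k (equivalently, the cardinalities |C_0|, …, |C_{2k}| do not strictly increase). Then the sum of sgn_c(a_0, a_1, …, a_{2k}) over all tuples with a_j ∈ C_j for each j equals 0. In particular, the cochain value c^k(C_0,…,C_{2k}) = ((−1)^k k! / ((2k)! · |C_0|⋯|C_{2k}|)) · Σ_{a_j ∈ C_j} sgn_c(a_0,…,a_{2k}) is nonzero only if |C_0| < |C_1| < ⋯ < |C_{2k}|. -/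
/-!
Exchanging the entries `i` and `i + 1` of a tuple multiplies its cyclic sign by `-1`, and it
permutes the tuples with `a j ∈ C j` when `C i = C (i + 1)`; hence the sum equals its own negative.

The substance is that the cyclic sign of a tuple of odd length `m` does not depend on the sorting
permutation. In a tuple in cyclic order, the entry `i + 1` (indices mod `m`) is the first one met
when moving upwards from entry `i` around `ℤ/n` (`emod_sub_succ_le`). This is intrinsic, so a
permutation `ρ` between two tuples in cyclic order satisfies `ρ (i + 1) = ρ i + 1`, i.e. it is a
rotation, and its sign is `1` because its `m`-th power is trivial and `m` is odd.
-/

/-- A tuple of elements of `ZMod n` is *in cyclic order* if it admits integer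
representatives `y 0 < y 1 < ⋯ < y (m-1) < y 0 + n`. -/
def InCyclicOrder (n : ℕ) {m : ℕ} (x : Fin m → ZMod n) : Prop :=
  ∃ y : Fin m → ℤ, StrictMono y ∧ (∀ i, ((y i : ℤ) : ZMod n) = x i) ∧
    ∀ i j, y i < y j + (n : ℤ)

open Classical in
/-- The cyclic sign of a tuple of elements of `ZMod n`: it is `0` if the entries
are not pairwise distinct, and otherwise the sign of any permutation `σ` putting
the tuple in cyclic order (well defined for tuples of odd length). -/
noncomputable def cycSign (n : ℕ) {m : ℕ} (x : Fin m → ZMod n) : ℤ :=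
  if h : ∃ σ : Equiv.Perm (Fin m), InCyclicOrder n (x ∘ σ) then
    ((Equiv.Perm.sign h.choose : ℤˣ) : ℤ)
  else 0

/-- The cyclic set cochain `c^k` evaluated on a chain `C_0 ⊆ ⋯ ⊆ C_{2k}` of
subsets of `ℤ/n`. -/
noncomputable def cycCochain (n k : ℕ) (D : Fin (2 * k + 1) → Finset (ZMod n)) : ℚ :=
  ((-1) ^ k * (Nat.factorial k : ℚ)) /
      ((Nat.factorial (2 * k) : ℚ) * ∏ i, ((D i).card : ℚ)) *
    ∑ a ∈ Fintype.piFinset D, (cycSign n a : ℚ)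

/-- Among integers `y 0 < ⋯ < y (2k) < y 0 + n`, the upward distance mod `n` from `y i` to another
member is least for the cyclic successor `y (i + 1)`, where `i + 1` is computed mod `2k + 1`. -/
lemma emod_sub_succ_le {n k : ℕ} {y : Fin (2 * k + 1) → ℤ} (hy : StrictMono y)
    (hw : ∀ i j, y i < y j + (n : ℤ)) {i j : Fin (2 * k + 1)} (hij : j ≠ i) :
    (y (i + 1) - y i) % (n : ℤ) ≤ (y j - y i) % (n : ℤ) := by
  have up : ∀ l, i < l → (y l - y i) % (n : ℤ) = y l - y i := fun l hl =>
    Int.emod_eq_of_lt (by linarith [hy hl]) (by linarith [hw l i])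
  have down : ∀ l, l < i → (y l - y i) % (n : ℤ) = y l - y i + n := fun l hl => by
    rw [← Int.add_emod_right]
    exact Int.emod_eq_of_lt (by linarith [hw i l]) (by linarith [hy hl])
  by_cases hi : i = Fin.last (2 * k)
  · have hj : j < i := lt_of_le_of_ne (hi ▸ Fin.le_last j) hij
    have h0 : i + 1 = 0 := by rw [hi, Fin.last_add_one]
    rw [h0, down j hj, down 0 (lt_of_le_of_lt (Fin.zero_le j) hj)]
    linarith [hy.monotone (Fin.zero_le j)]
  · have hlt : i < i + 1 := Fin.lt_add_one_iff.2 (lt_of_le_of_ne (Fin.le_last i) hi)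
    rw [up _ hlt]
    rcases lt_or_gt_of_ne hij with h | h
    · rw [down j h]
      linarith [hw (i + 1) j]
    · rw [up j h]
      linarith [hy.monotone (Fin.add_one_le_of_lt h)]

/-- A rotation of an odd number of indices is an even permutation. -/
lemma sign_addRight_fin (k : ℕ) (c : Fin (2 * k + 1)) :
    Equiv.Perm.sign (Equiv.addRight c) = 1 := by
  have h : (Equiv.addRight c) ^ (2 * k + 1) = 1 := by
    have hpow : ∀ (m : ℕ) (i : Fin (2 * k + 1)), ((Equiv.addRight c) ^ m) i = i + m • c := by
      intro m i
      induction m with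
      | zero => simp
      | succ m ih =>
        rw [pow_succ', Equiv.Perm.mul_apply, ih, Equiv.coe_addRight, succ_nsmul]
        exact add_assoc _ _ _
    have h0 : (2 * k + 1) • c = 0 := by simpa using card_nsmul_eq_zero' (x := c)
    ext1 i
    rw [hpow, h0, add_zero, Equiv.Perm.one_apply]
  have h2 := congrArg Equiv.Perm.sign h
  rw [map_pow, map_one, pow_succ, pow_mul, Int.units_sq, one_pow, one_mul] at h2
  exact h2

/-- A permutation relating two cyclically ordered tuples of odd length is a rotation, hence even. -/
lemma sign_eq_one_of_inCyclicOrder {n k : ℕ} {x : Fin (2 * k + 1) → ZMod n}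
    {ρ : Equiv.Perm (Fin (2 * k + 1))} (hx : InCyclicOrder n x)
    (hρ : InCyclicOrder n (x ∘ ρ)) : Equiv.Perm.sign ρ = 1 := by
  obtain ⟨y, hy, hyx, hyw⟩ := hx
  obtain ⟨z, hz, hzx, hzw⟩ := hρ
  have hzy : ∀ i, z i ≡ y (ρ i) [ZMOD n] := fun i => by
    rw [← ZMod.intCast_eq_intCast_iff, hzx, hyx]
    rfl
  have hinj : ∀ a b, y a ≡ y b [ZMOD n] → a = b := fun a b h => by
    have h1 := Int.eq_zero_of_abs_lt_dvd h.dvd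
      (abs_lt.2 ⟨by linarith [hyw a b], by linarith [hyw b a]⟩)
    exact hy.injective (by linarith)
  have hstep : ∀ i, ρ (i + 1) = ρ i + 1 := by
    intro i
    rcases Nat.eq_zero_or_pos k with rfl | hk
    · exact Subsingleton.elim (α := Fin 1) _ _
    have hne : ∀ l : Fin (2 * k + 1), l + 1 ≠ l := fun l h => by
      have h1 : (1 : Fin (2 * k + 1)) = 0 := by simpa using h
      have := Fin.one_eq_zero_iff.1 h1
      omega
    obtain ⟨j, hj⟩ := ρ.surjective (ρ i + 1)
    have hji : j ≠ i := by
      rintro rfl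
      exact hne _ hj.symm
    -- Both `ρ i + 1` (seen in `y`) and `ρ (i + 1)` (seen in `z`) minimize the distance from `ρ i`.
    have h1 := emod_sub_succ_le hy hyw (i := ρ i) (j := ρ (i + 1))
      (fun h => hne i (ρ.injective h))
    have h2 := emod_sub_succ_le hz hzw hji
    rw [((hzy (i + 1)).sub (hzy i)).eq, ((hzy j).sub (hzy i)).eq, hj] at h2
    have h3 : y (ρ (i + 1)) - y (ρ i) ≡ y (ρ i + 1) - y (ρ i) [ZMOD n] := le_antisymm h2 h1
    apply hinj
    simpa using h3.add_right (y (ρ i))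
  have hrot : ρ = Equiv.addRight (ρ 0) := by
    ext1 i
    rw [Equiv.coe_addRight]
    induction i using Fin.induction with
    | zero => simp
    | succ i ih =>
      rw [← Fin.coeSucc_eq_succ, hstep, ih]
      exact add_right_comm _ _ _
  rw [hrot]
  exact sign_addRight_fin k _

/-- The cyclic sign may be computed with any permutation that puts the tuple in cyclic order. -/
lemma cycSign_eq_sign {n k : ℕ} {x : Fin (2 * k + 1) → ZMod n}
    {σ : Equiv.Perm (Fin (2 * k + 1))} (hσ : InCyclicOrder n (x ∘ σ)) :
    cycSign n x = ((Equiv.Perm.sign σ : ℤˣ) : ℤ) := by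
  have h : ∃ σ : Equiv.Perm (Fin (2 * k + 1)), InCyclicOrder n (x ∘ σ) := ⟨σ, hσ⟩
  rw [cycSign, dif_pos h]
  have h1 : Equiv.Perm.sign (σ⁻¹ * h.choose) = 1 := by
    refine sign_eq_one_of_inCyclicOrder hσ ?_
    have : (x ∘ σ) ∘ ⇑(σ⁻¹ * h.choose) = x ∘ h.choose := by
      ext i
      simp
    rw [this]
    exact h.choose_spec
  rw [map_mul, Equiv.Perm.sign_inv] at h1
  rw [← mul_left_cancel (h1.trans (Int.units_mul_self _).symm)]

lemma cycSign_comp_perm {n k : ℕ} (x : Fin (2 * k + 1) → ZMod n)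
    (τ : Equiv.Perm (Fin (2 * k + 1))) :
    cycSign n (x ∘ τ) = ((Equiv.Perm.sign τ : ℤˣ) : ℤ) * cycSign n x := by
  by_cases h : ∃ σ : Equiv.Perm (Fin (2 * k + 1)), InCyclicOrder n (x ∘ σ)
  · obtain ⟨σ, hσ⟩ := h
    have h' : InCyclicOrder n ((x ∘ τ) ∘ ⇑(τ⁻¹ * σ)) := by
      have : (x ∘ τ) ∘ ⇑(τ⁻¹ * σ) = x ∘ σ := by
        ext i
        simp
      rwa [this]
    rw [cycSign_eq_sign hσ, cycSign_eq_sign h', map_mul, Equiv.Perm.sign_inv, Units.val_mul]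
  · have h' : ¬ ∃ σ : Equiv.Perm (Fin (2 * k + 1)), InCyclicOrder n ((x ∘ τ) ∘ σ) := by
      rintro ⟨σ, hσ⟩
      exact h ⟨τ * σ, hσ⟩
    rw [cycSign, cycSign, dif_neg h, dif_neg h', mul_zero]

/-- If two consecutive sets in a chain `C_0 ⊆ ⋯ ⊆ C_{2k}` of nonempty subsets of
`ℤ/n` coincide (equivalently, the cardinalities do not strictly increase), then
the sum of cyclic signs over all tuples with `a_j ∈ C_j` vanishes, and hence so
does the cochain value `c^k(C_0,…,C_{2k})`; so `c^k` is nonzero only if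
`|C_0| < |C_1| < ⋯ < |C_{2k}|`. -/
theorem sum_cycSign_eq_zero_of_repeat (n : ℕ) (hn : 1 ≤ n) (k : ℕ)
    (C : Fin (2 * k + 1) → Finset (ZMod n)) (hmono : Monotone C)
    (hne : ∀ i, (C i).Nonempty)
    (hrep : ∃ i : Fin (2 * k), C i.castSucc = C i.succ) :
    (∑ a ∈ Fintype.piFinset C, cycSign n a) = 0 ∧ cycCochain n k C = 0 := by
  have key : (∑ a ∈ Fintype.piFinset C, cycSign n a) = 0 := by
    obtain ⟨i, hi⟩ := hrep
    set τ : Equiv.Perm (Fin (2 * k + 1)) := Equiv.swap i.castSucc i.succ with hτ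
    have hττ : ∀ j, τ (τ j) = j := fun j => Equiv.swap_apply_self _ _ j
    have hC : ∀ j, C (τ j) = C j := fun j => by
      rw [hτ, Equiv.swap_apply_def]
      split_ifs with h1 h2
      · rw [h1, hi]
      · rw [h2, hi]
      · rfl
    have hmem : ∀ a ∈ Fintype.piFinset C, a ∘ τ ∈ Fintype.piFinset C := fun a ha => by
      rw [Fintype.mem_piFinset] at ha ⊢
      exact fun j => hC j ▸ ha (τ j)
    have hinv : ∀ a : Fin (2 * k + 1) → ZMod n, (a ∘ τ) ∘ τ = a := fun a => by
      ext j
      simp [hττ]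
    have hsign : ∀ a, cycSign n a = -cycSign n (a ∘ τ) := fun a => by
      rw [cycSign_comp_perm, hτ, Equiv.Perm.sign_swap (Fin.castSucc_lt_succ (i := i)).ne]
      simp
    have hS : (∑ a ∈ Fintype.piFinset C, cycSign n a) =
        ∑ a ∈ Fintype.piFinset C, -cycSign n a :=
      Finset.sum_nbij' (fun a => a ∘ τ) (fun a => a ∘ τ) hmem hmem
        (fun a _ => hinv a) (fun a _ => hinv a) (fun a _ => hsign a)
    rw [Finset.sum_neg_distrib] at hS
    omega
  refine ⟨key, ?_⟩
  rw [cycCochain, ← Int.cast_sum, key, Int.cast_zero, mul_zero]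
end

section
/- Fix integers n ≥ 1 and k ≥ 1, and let C_0 ⊆ C_1 ⊆ ⋯ ⊆ C_{2k} be a chain of nonempty subsets of {1, …, n}. For a chain D_0 ⊆ ⋯ ⊆ D_{2k−1} of nonempty subsets of {1,…,n} define s_k(D_0,…,D_{2k−1}) = ((−1)^k k! / ((2k)! · |D_0|⋯|D_{2k−1}|)) · Σ sgn_ℓ(a_0, …, a_{2k−1}), the sum over all tuples with a_i ∈ D_i, and for a chain D_0 ⊆ ⋯ ⊆ D_{2k} define c^k(D_0,…,D_{2k}) = ((−1)^k k! / ((2k)! · |D_0|⋯|D_{2k}|)) · Σ sgn_ℓ(a_0, …, a_{2k}), the sum over all tuples with a_i ∈ D_i. Then c^k(C_0, …, C_{2k}) = Σ_{i=0}^{2k} (−1)^i · s_k(C_0, …, Ĉ_i, …, C_{2k}), where Ĉ_i means the set C_i is omitted from the chain. -/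
/-!
The identity already holds for each individual tuple: for odd `m + 1` and every tuple
`x = (x_0, …, x_m)`,
`sgn x = Σ_i (-1)^i sgn (x_0, …, x̂_i, …, x_m)` (`linSign_eq_linSignCobdry`).
Both sides are antisymmetric in the entries of `x` (`linSign_comp_perm`,
`linSignCobdry_comp_perm`), so both vanish when two entries coincide, and otherwise `x` may be
taken strictly increasing, where the identity reads `1 = Σ_{i ≤ m} (-1)^i`.

The cochains are, up to the common constant `(-1)^k k! / (2k)!`, averages of signs over
`a_i ∈ C_i`. Averaging a function independent of the coordinate `a_i` over `a_i ∈ C_i` has no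
effect, because `C_i` is nonempty (`sum_piFinset_comp_succAbove`), so averaging the pointwise
identity gives the theorem.
-/

open Classical in
/-- The linear sign of a tuple of elements of `Fin n`: it is `0` if the entries
are not pairwise distinct, and otherwise the sign of the permutation sorting the
tuple into increasing order. -/
noncomputable def linSign {n m : ℕ} (x : Fin m → Fin n) : ℤ :=
  if h : ∃ σ : Equiv.Perm (Fin m), StrictMono (x ∘ σ) then
    ((Equiv.Perm.sign h.choose : ℤˣ) : ℤ)
  else 0

/-- The `(2k-1)`-cochain `s_k` on chains `D_0 ⊆ ⋯ ⊆ D_{2k-1}` of subsets of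
`{1,…,n}`:
`s_k(D) = ((-1)^k k! / ((2k)! |D_0|⋯|D_{2k-1}|)) Σ_{a_i ∈ D_i} sgn_ℓ(a_0,…,a_{2k-1})`. -/
noncomputable def linCochainS (n k : ℕ) (D : Fin (2 * k) → Finset (Fin n)) : ℚ :=
  ((-1) ^ k * (Nat.factorial k : ℚ)) /
      ((Nat.factorial (2 * k) : ℚ) * ∏ i, ((D i).card : ℚ)) *
    ∑ a ∈ Fintype.piFinset D, (linSign a : ℚ)

/-- The `2k`-cochain `c^k` on chains `D_0 ⊆ ⋯ ⊆ D_{2k}` of subsets of `{1,…,n}`: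
`c^k(D) = ((-1)^k k! / ((2k)! |D_0|⋯|D_{2k}|)) Σ_{a_i ∈ D_i} sgn_ℓ(a_0,…,a_{2k})`. -/
noncomputable def linCochainC (n k : ℕ) (D : Fin (2 * k + 1) → Finset (Fin n)) : ℚ :=
  ((-1) ^ k * (Nat.factorial k : ℚ)) /
      ((Nat.factorial (2 * k) : ℚ) * ∏ i, ((D i).card : ℚ)) *
    ∑ a ∈ Fintype.piFinset D, (linSign a : ℚ)

/-- The sorting permutation of a tuple is unique, so any one computes the linear sign. -/
theorem linSign_eq_sign {n m : ℕ} {x : Fin m → Fin n} {σ : Equiv.Perm (Fin m)}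
    (h : StrictMono (x ∘ σ)) : linSign x = ((Equiv.Perm.sign σ : ℤˣ) : ℤ) := by
  have hex : ∃ σ : Equiv.Perm (Fin m), StrictMono (x ∘ σ) := ⟨σ, h⟩
  have hinj : Function.Injective x := by
    have := h.injective.comp σ.symm.injective
    simpa [Function.comp_assoc] using this
  have huniq : x ∘ hex.choose = x ∘ σ := by
    rw [← hex.choose_spec.range_inj h]
    simp [Set.range_comp]
  have heq : hex.choose = σ := Equiv.ext fun i => hinj (congrFun huniq i)
  rw [linSign, dif_pos hex, heq]

theorem linSign_eq_zero {n m : ℕ} {x : Fin m → Fin n} (h : ¬ Function.Injective x) :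
    linSign x = 0 := by
  refine dif_neg fun ⟨σ, hσ⟩ => h ?_
  have := hσ.injective.comp σ.symm.injective
  simpa [Function.comp_assoc] using this

theorem exists_strictMono_comp {n m : ℕ} {x : Fin m → Fin n} (h : Function.Injective x) :
    ∃ σ : Equiv.Perm (Fin m), StrictMono (x ∘ σ) :=
  ⟨Tuple.sort x, (Tuple.monotone_sort x).strictMono_of_injective
    (h.comp (Tuple.sort x).injective)⟩

theorem linSign_of_strictMono {n m : ℕ} {x : Fin m → Fin n} (h : StrictMono x) :
    linSign x = 1 := by
  simpa using linSign_eq_sign (σ := 1) h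

theorem linSign_comp_perm {n m : ℕ} (x : Fin m → Fin n) (ρ : Equiv.Perm (Fin m)) :
    linSign (x ∘ ρ) = ((Equiv.Perm.sign ρ : ℤˣ) : ℤ) * linSign x := by
  by_cases hx : Function.Injective x
  · obtain ⟨σ, hσ⟩ := exists_strictMono_comp hx
    have hσ' : StrictMono ((x ∘ ρ) ∘ (ρ⁻¹ * σ : Equiv.Perm (Fin m))) := by
      convert hσ using 1
      ext i
      simp
    rw [linSign_eq_sign hσ, linSign_eq_sign hσ']
    simp
  · rw [linSign_eq_zero hx, linSign_eq_zero, mul_zero]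
    exact fun h => hx (by simpa [Function.comp_assoc] using h.comp ρ.symm.injective)

/-- The simplicial coboundary of the linear sign: the alternating sum of the signs of the tuples
obtained from `x` by omitting one entry. -/
noncomputable def linSignCobdry {n m : ℕ} (x : Fin (m + 1) → Fin n) : ℤ :=
  ∑ i : Fin (m + 1), (-1) ^ (i : ℕ) * linSign (x ∘ i.succAbove)

/-- Swapping two adjacent entries exchanges the two summands that omit one of them, which carry
opposite signs, and swaps two entries of the remaining tuple in every other summand. -/
theorem linSignCobdry_comp_swap {n m : ℕ} (x : Fin (m + 1) → Fin n) (j : Fin m) :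
    linSignCobdry (x ∘ Equiv.swap j.castSucc j.succ) = - linSignCobdry x := by
  have hne : j.castSucc ≠ j.succ := (Fin.castSucc_lt_succ).ne
  unfold linSignCobdry
  rw [← Finset.sum_neg_distrib,
    ← Equiv.sum_comp (Equiv.swap j.castSucc j.succ)
      (fun i => -((-1) ^ (i : ℕ) * linSign (x ∘ i.succAbove)))]
  refine Finset.sum_congr rfl fun i _ => ?_
  -- Omitting entry `j` after the swap is the same as omitting entry `j + 1` before it.
  have hcomp : Equiv.swap j.castSucc j.succ ∘ j.castSucc.succAbove = j.succ.succAbove := by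
    funext l
    rcases lt_trichotomy l j with h | h | h
    · rw [Function.comp_apply, Fin.succAbove_of_castSucc_lt _ _ (by simpa using h),
        Fin.succAbove_of_castSucc_lt _ _ (by
          simp only [Fin.lt_def, Fin.val_castSucc, Fin.val_succ] at h ⊢; omega),
        Equiv.swap_apply_of_ne_of_ne] <;>
      · simp only [ne_eq, Fin.ext_iff, Fin.lt_def, Fin.val_castSucc, Fin.val_succ] at h ⊢
        omega
    · subst h
      simp
    · rw [Function.comp_apply, Fin.succAbove_of_le_castSucc _ _ (by simpa using h.le),
        Fin.succAbove_of_le_castSucc _ _ (by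
          simp only [Fin.lt_def, Fin.le_def, Fin.val_castSucc, Fin.val_succ] at h ⊢; omega),
        Equiv.swap_apply_of_ne_of_ne] <;>
      · simp only [ne_eq, Fin.ext_iff, Fin.lt_def, Fin.val_castSucc, Fin.val_succ] at h ⊢
        omega
  by_cases h1 : i = j.castSucc
  · subst h1
    rw [Function.comp_assoc, hcomp]
    simp [pow_succ]
  by_cases h2 : i = j.succ
  · subst h2
    rw [Function.comp_assoc, ← hcomp, ← Function.comp_assoc (Equiv.swap _ _)]
    have : (Equiv.swap j.castSucc j.succ : Fin (m + 1) → Fin (m + 1)) ∘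
        Equiv.swap j.castSucc j.succ = id := by
      funext l
      simp
    rw [this]
    simp [pow_succ]
  · obtain ⟨a, ha⟩ := Fin.exists_succAbove_eq (Ne.symm h1)
    obtain ⟨b, hb⟩ := Fin.exists_succAbove_eq (Ne.symm h2)
    have hab : a ≠ b := by
      rintro rfl
      exact hne (ha.symm.trans hb)
    rw [Equiv.swap_apply_of_ne_of_ne h1 h2, Function.comp_assoc, ← ha, ← hb,
      Fin.succAbove_right_injective.swap_comp, ← Function.comp_assoc, linSign_comp_perm,
      Equiv.Perm.sign_swap hab]
    simp

/-- Adjacent transpositions generate the symmetric group, so the coboundary is antisymmetric. -/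
theorem linSignCobdry_comp_perm {n m : ℕ} (ρ : Equiv.Perm (Fin (m + 1)))
    (x : Fin (m + 1) → Fin n) :
    linSignCobdry (x ∘ ρ) = ((Equiv.Perm.sign ρ : ℤˣ) : ℤ) * linSignCobdry x := by
  have hρ : ρ ∈ Submonoid.closure
      (Set.range fun i : Fin m => Equiv.swap i.castSucc i.succ) := by
    rw [Equiv.Perm.mclosure_swap_castSucc_succ]
    trivial
  induction hρ using Submonoid.closure_induction generalizing x with
  | mem σ h =>
    obtain ⟨j, rfl⟩ := h
    simp [linSignCobdry_comp_swap, Equiv.Perm.sign_swap (Fin.castSucc_lt_succ (i := j)).ne]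
  | one => simp
  | mul σ τ _ _ hσ hτ =>
    rw [Equiv.Perm.coe_mul, ← Function.comp_assoc, hτ, hσ]
    simp
    ring

theorem linSign_eq_linSignCobdry {n m : ℕ} (hm : Even m) (x : Fin (m + 1) → Fin n) :
    linSign x = linSignCobdry x := by
  by_cases hx : Function.Injective x
  · obtain ⟨σ, hσ⟩ := exists_strictMono_comp hx
    have hsorted : linSign (x ∘ σ) = linSignCobdry (x ∘ σ) := by
      rw [linSign_of_strictMono hσ, linSignCobdry]
      simp only [linSign_of_strictMono (hσ.comp (Fin.strictMono_succAbove _)), mul_one]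
      rw [Fin.sum_univ_eq_sum_range (fun i => (-1 : ℤ) ^ i), neg_one_geom_sum,
        if_neg (by simpa [Nat.even_add_one] using hm)]
    rw [linSign_comp_perm, linSignCobdry_comp_perm] at hsorted
    exact mul_left_cancel₀ (Units.ne_zero _) hsorted
  · rw [linSign_eq_zero hx]
    rw [Function.Injective] at hx
    push Not at hx
    obtain ⟨a, b, hab, hne⟩ := hx
    have hswap : x ∘ Equiv.swap a b = x := by
      funext l
      rcases eq_or_ne l a with rfl | ha
      · simp [hab]
      · rcases eq_or_ne l b with rfl | hb
        · simp [hab]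
        · simp [Equiv.swap_apply_of_ne_of_ne ha hb]
    have h := linSignCobdry_comp_perm (Equiv.swap a b) x
    rw [hswap, Equiv.Perm.sign_swap hne] at h
    simp at h
    omega

/-- Summing a function that does not depend on the `i`-th coordinate over a product of finsets
multiplies its sum over the remaining coordinates by the size of the `i`-th factor. -/
theorem sum_piFinset_comp_succAbove {n m : ℕ} (C : Fin (m + 1) → Finset (Fin n))
    (i : Fin (m + 1)) (f : (Fin m → Fin n) → ℚ) :
    ∑ a ∈ Fintype.piFinset C, f (a ∘ i.succAbove)
      = ((C i).card : ℚ) * ∑ b ∈ Fintype.piFinset (C ∘ i.succAbove), f b := by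
  have h : ∑ a ∈ Fintype.piFinset C, f (a ∘ i.succAbove)
      = ∑ p ∈ C i ×ˢ Fintype.piFinset (C ∘ i.succAbove), f p.2 := by
    refine Finset.sum_nbij' (fun a => (a i, a ∘ i.succAbove))
      (fun p => i.insertNth (α := fun _ => Fin n) p.1 p.2) ?_ ?_ ?_ ?_ ?_
    · intro a ha
      simp only [Fintype.mem_piFinset, Finset.mem_product] at ha ⊢
      exact ⟨ha i, fun j => ha _⟩
    · intro p hp
      simp only [Fintype.mem_piFinset, Finset.mem_product] at hp ⊢
      rw [Fin.forall_iff_succAbove i]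
      simpa using hp
    · intro a _
      exact Fin.insertNth_self_removeNth i a
    · intro p _
      ext1
      · simp
      · funext j
        simp
    · intro a _
      rfl
  rw [h, Finset.sum_product]
  simp

/-- On linearly ordered sets, the pullback of the cyclic set cocycle is the
coboundary of `s_k`: for every chain `C_0 ⊆ ⋯ ⊆ C_{2k}` of nonempty subsets of
`{1,…,n}`, `c^k(C) = Σ_{i} (-1)^i s_k(C_0,…,Ĉ_i,…,C_{2k})`. -/
theorem linCochainC_eq_alternating_sum_linCochainS (n k : ℕ) (hn : 1 ≤ n) (hk : 1 ≤ k)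
    (C : Fin (2 * k + 1) → Finset (Fin n)) (hmono : Monotone C)
    (hne : ∀ i, (C i).Nonempty) :
    linCochainC n k C
      = ∑ i : Fin (2 * k + 1), (-1 : ℚ) ^ (i : ℕ) * linCochainS n k (C ∘ i.succAbove) := by
  have hprod : ∀ i, ((C i).card : ℚ) ≠ 0 := fun i => by
    exact_mod_cast (hne i).card_pos.ne'
  have hsum : ∑ a ∈ Fintype.piFinset C, (linSign a : ℚ)
      = ∑ i : Fin (2 * k + 1), (-1 : ℚ) ^ (i : ℕ) *
        (((C i).card : ℚ) * ∑ b ∈ Fintype.piFinset (C ∘ i.succAbove), (linSign b : ℚ)) := by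
    simp_rw [← sum_piFinset_comp_succAbove C _ (fun b => (linSign b : ℚ)), Finset.mul_sum]
    rw [Finset.sum_comm]
    refine Finset.sum_congr rfl fun a _ => ?_
    rw [linSign_eq_linSignCobdry (even_two_mul k), linSignCobdry]
    push_cast
    rfl
  rw [linCochainC, hsum, Finset.mul_sum]
  refine Finset.sum_congr rfl fun i _ => ?_
  rw [linCochainS, Fin.prod_univ_succAbove _ i]
  have h1 := hprod i
  have h2 : ∏ j, ((C (i.succAbove j)).card : ℚ) ≠ 0 :=
    Finset.prod_ne_zero_iff.2 fun j _ => hprod _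
  have h3 : (Nat.factorial (2 * k) : ℚ) ≠ 0 := by exact_mod_cast Nat.factorial_ne_zero _
  simp only [Function.comp_apply]
  field_simp
end
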